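/- arXiv:2602.02992 — 2 statements merged into one kernel-verified Lean document; each statement's English description precedes it below -/
import Mathlib

section
/- Let q, r ≥ 1 and let M, N ∈ ℝ^{(q+r)×(q+r)} be symmetric, partitioned as M = [[M₁₁, M₁₂],[M₁₂^⊤, M₂₂]] and N = [[N₁₁, N₁₂],[N₁₂^⊤, N₂₂]] where the (1,1)-blocks are q×q and the (2,2)-blocks are r×r. Assume N₂₂ is negative definite, ker N₂₂ ⊆ ker N₁₂, and N₁₁ − N₁₂ N₂₂^{−1} N₁₂^⊤ is positive semidefinite. Then the inclusion { Z ∈ ℝ^{r×q} : [I_q; Z]^⊤ N [I_q; Z] is positive semidefinite } ⊆ { Z ∈ ℝ^{r×q} : [I_q; Z]^⊤ M [I_q; Z] is positive definite } holds if and only if there exists a scalar α ≥ 0 such that M − αN is positive definite. -/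
open Matrix

/-- The `(q+r) × q` matrix `[I_q; Z]` obtained by stacking `I_q` on top of `Z`. -/
def stackIZ {q r : ℕ} (Z : Matrix (Fin r) (Fin q) ℝ) :
    Matrix (Fin q ⊕ Fin r) (Fin q) ℝ :=
  Matrix.of (Sum.elim (fun a j => if a = j then (1 : ℝ) else 0) (fun b j => Z b j))

/-!
Suppose no form `(1 - t) Q₁ + t Q₂` with `t ∈ [0, 1)` is positive definite; by compactness each with
`t ∈ [0, 1]` takes a nonpositive value at some unit vector, where `Q₁` or `Q₂` is nonpositive too.
The parameters `t` for which `Q₁`, respectively `Q₂`, is nonpositive at such a vector form two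
nonempty closed sets covering `[0, 1]`, so they share some `t`. Joining its two vectors inside
`{(1 - t) Q₁ + t Q₂ ≤ 0}` by a segment yields `w ≠ 0` with `Q₁ w ≤ 0` and `Q₂ w ≤ 0`. Hence, if no
such `w` exists, some `(1 - t) Q₁ + t Q₂` is positive definite; with `Q₁ = M` and `Q₂ = -N` this is
the S-lemma.

To reach matrices, complete the square in `N`: `(x, y)` lies in the cone `{N ≥ 0}` exactly when
`u = N₂₂⁻¹ N₁₂ᵀ x + y` satisfies `-uᵀ N₂₂ u ≤ xᵀ (N₁₁ - N₁₂ N₂₂⁻¹ N₁₂ᵀ) x`, and a rank-one choice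
then gives a feasible `Z` with `Z x = y`.
-/

section QuadraticForms

open QuadraticMap Set AffineMap Metric

theorem isClosed_setOf_exists_mem {X Y : Type*} [TopologicalSpace X] [TopologicalSpace Y]
    {K : Set Y} (hK : IsCompact K) {C : Set (X × Y)} (hC : IsClosed C) :
    IsClosed {x | ∃ y ∈ K, (x, y) ∈ C} := by
  have : CompactSpace K := isCompact_iff_compactSpace.mp hK
  convert isClosedMap_fst_of_compactSpace (Y := K) _
    (hC.preimage (continuous_id.prodMap continuous_subtype_val)) using 1
  ext x
  simp

theorem quadraticForm_nonpos_of_mem_segment {R V : Type*} [CommRing R] [PartialOrder R]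
    [IsOrderedRing R] [AddCommGroup V] [Module R V] {Q : QuadraticForm R V} {u v w : V}
    (hu : Q u ≤ 0) (hv : Q v ≤ 0) (huv : polar Q u v ≤ 0) (hw : w ∈ segment R u v) :
    Q w ≤ 0 := by
  obtain ⟨a, b, ha, hb, -, rfl⟩ := hw
  simp only [QuadraticMap.map_add, QuadraticMap.map_smul, polar_smul_left, polar_smul_right,
    smul_eq_mul]
  refine add_nonpos (add_nonpos ?_ ?_) ?_
  · exact mul_nonpos_of_nonneg_of_nonpos (mul_nonneg ha ha) hu
  · exact mul_nonpos_of_nonneg_of_nonpos (mul_nonneg hb hb) hv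
  · exact mul_nonpos_of_nonneg_of_nonpos hb (mul_nonpos_of_nonneg_of_nonpos ha huv)

theorem quadraticForm_nonpos_of_zero_mem_segment {K V : Type*} [Field K] [LinearOrder K]
    [IsStrictOrderedRing K] [AddCommGroup V] [Module K V] {Q : QuadraticForm K V} {u v : V}
    (hu : u ≠ 0) (h0 : 0 ∈ segment K u v) (hQu : Q u ≤ 0) : Q v ≤ 0 := by
  obtain ⟨a, b, -, -, hab, h⟩ := h0
  have hb : b ≠ 0 := by
    rintro rfl
    simp_all
  have hQ : b * b * Q v = a * a * Q u := by
    simpa only [QuadraticMap.map_neg, QuadraticMap.map_smul, smul_eq_mul]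
      using congrArg Q (eq_neg_of_add_eq_zero_right h)
  refine nonpos_of_mul_nonpos_right ?_ (mul_self_pos.mpr hb)
  exact hQ ▸ mul_nonpos_of_nonneg_of_nonpos (mul_self_nonneg a) hQu

theorem lineMap_quadraticForm_apply {R V : Type*} [CommRing R] [AddCommGroup V] [Module R V]
    (Q₁ Q₂ : QuadraticForm R V) (t : R) (v : V) :
    lineMap Q₁ Q₂ t v = (1 - t) * Q₁ v + t * Q₂ v := by
  rw [lineMap_apply_module, _root_.add_apply, _root_.smul_apply, _root_.smul_apply, smul_eq_mul,
    smul_eq_mul]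

theorem nonpos_or_nonpos_of_lineMap_nonpos {K V : Type*} [Field K] [LinearOrder K]
    [IsStrictOrderedRing K] [AddCommGroup V] [Module K V] {Q₁ Q₂ : QuadraticForm K V} {t : K}
    (ht : t ∈ Icc 0 1) {v : V} (hv : lineMap Q₁ Q₂ t v ≤ 0) : Q₁ v ≤ 0 ∨ Q₂ v ≤ 0 := by
  by_contra! hpos
  rw [lineMap_quadraticForm_apply] at hv
  exact hv.not_gt <|
    convex_Ioi (0 : K) hpos.1 hpos.2 (sub_nonneg.mpr ht.2) ht.1 (sub_add_cancel 1 t)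

variable {E : Type*} [NormedAddCommGroup E] [NormedSpace ℝ E]

theorem exists_mem_sphere_nonpos_of_not_posDef {Q : QuadraticForm ℝ E} (hQ : ¬ Q.PosDef) :
    ∃ v ∈ sphere (0 : E) 1, Q v ≤ 0 := by
  obtain ⟨v, hv, hle⟩ : ∃ v, v ≠ 0 ∧ Q v ≤ 0 := by simpa [QuadraticMap.PosDef] using hQ
  refine ⟨‖v‖⁻¹ • v, by simp [norm_smul, hv], ?_⟩
  rw [QuadraticMap.map_smul]
  exact mul_nonpos_of_nonneg_of_nonpos (mul_self_nonneg _) hle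

variable [FiniteDimensional ℝ E]

@[fun_prop]
theorem continuous_quadraticForm (Q : QuadraticForm ℝ E) : Continuous fun x ↦ Q x := by
  have hB : Continuous fun x ↦ (associated Q).toContinuousBilinearMap x x := by fun_prop
  simpa [LinearMap.toContinuousBilinearMap_apply, associated_eq_self_apply] using hB

/-- Up to replacing `v` by `-v`, the set `{Q ≤ 0}` contains the segment from `u` to `v`, which the
closed sets `{Q₁ ≤ 0}` and `{Q₂ ≤ 0}` cover and hence, by connectedness, cannot separate. -/
theorem exists_ne_zero_nonpos_and_nonpos {Q Q₁ Q₂ : QuadraticForm ℝ E}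
    (hcover : ∀ w, Q w ≤ 0 → Q₁ w ≤ 0 ∨ Q₂ w ≤ 0) {u v : E} (hu : u ≠ 0) (hv : v ≠ 0)
    (hQu : Q u ≤ 0) (hQv : Q v ≤ 0) (hu₁ : Q₁ u ≤ 0) (hv₂ : Q₂ v ≤ 0) :
    ∃ w ≠ 0, Q₁ w ≤ 0 ∧ Q₂ w ≤ 0 := by
  wlog hpolar : polar Q u v ≤ 0 generalizing v
  · refine this (v := -v) (neg_ne_zero.mpr hv) ?_ ?_ ?_
    · rwa [QuadraticMap.map_neg]
    · rwa [QuadraticMap.map_neg]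
    · rw [polar_neg_right]
      linarith
  by_cases h0 : (0 : E) ∈ segment ℝ u v
  · exact ⟨v, hv, quadraticForm_nonpos_of_zero_mem_segment hu h0 hu₁, hv₂⟩
  obtain ⟨w, hw, hw₁, hw₂⟩ := isPreconnected_closed_iff.mp
    (convex_segment (𝕜 := ℝ) u v).isPreconnected {w | Q₁ w ≤ 0} {w | Q₂ w ≤ 0}
    (isClosed_le (continuous_quadraticForm Q₁) continuous_const)
    (isClosed_le (continuous_quadraticForm Q₂) continuous_const)
    (fun w hw ↦ hcover w (quadraticForm_nonpos_of_mem_segment hQu hQv hpolar hw))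
    ⟨u, left_mem_segment ℝ u v, hu₁⟩ ⟨v, right_mem_segment ℝ u v, hv₂⟩
  exact ⟨w, ne_of_mem_of_not_mem hw h0, hw₁, hw₂⟩

theorem isClosed_setOf_exists_mem_sphere_lineMap_nonpos (Q₁ Q₂ Q : QuadraticForm ℝ E) :
    IsClosed {t : ℝ | ∃ v ∈ sphere (0 : E) 1, lineMap Q₁ Q₂ t v ≤ 0 ∧ Q v ≤ 0} := by
  have hpencil : Continuous fun p : ℝ × E ↦ lineMap Q₁ Q₂ p.1 p.2 := by
    simp only [lineMap_quadraticForm_apply]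
    fun_prop
  have hQ : Continuous fun p : ℝ × E ↦ Q p.2 := by fun_prop
  exact isClosed_setOf_exists_mem (isCompact_sphere 0 1)
    ((isClosed_le hpencil continuous_const).inter (isClosed_le hQ continuous_const))

theorem exists_mem_Ico_posDef_lineMap {Q₁ Q₂ : QuadraticForm ℝ E}
    (h : ∀ v ≠ 0, 0 < Q₁ v ∨ 0 < Q₂ v) :
    ∃ t ∈ Ico (0 : ℝ) 1, (lineMap Q₁ Q₂ t : QuadraticForm ℝ E).PosDef := by
  by_contra! hpencil
  let T (Q : QuadraticForm ℝ E) : Set ℝ :=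
    {t | ∃ v ∈ sphere (0 : E) 1, lineMap Q₁ Q₂ t v ≤ 0 ∧ Q v ≤ 0}
  have hclosed (Q : QuadraticForm ℝ E) : IsClosed (T Q) :=
    isClosed_setOf_exists_mem_sphere_lineMap_nonpos Q₁ Q₂ Q
  have hcover : Icc 0 1 ⊆ T Q₁ ∪ T Q₂ := by
    rw [← closure_Ico zero_ne_one]
    refine closure_minimal (fun t ht ↦ ?_) ((hclosed Q₁).union (hclosed Q₂))
    obtain ⟨v, hv, hle⟩ := exists_mem_sphere_nonpos_of_not_posDef (hpencil t ht)
    exact (nonpos_or_nonpos_of_lineMap_nonpos (Ico_subset_Icc_self ht) hle).imp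
      (fun h₁ ↦ ⟨v, hv, hle, h₁⟩) (fun h₂ ↦ ⟨v, hv, hle, h₂⟩)
  have hT₁ : 0 ∈ T Q₁ := by
    obtain ⟨v, hv, hle⟩ := exists_mem_sphere_nonpos_of_not_posDef (hpencil 0 (by simp))
    exact ⟨v, hv, hle, by simpa using hle⟩
  have hT₂ : 1 ∈ T Q₂ := by
    rcases hcover (right_mem_Icc.mpr zero_le_one) with ⟨v, hv, hle, -⟩ | h₂
    · exact ⟨v, hv, hle, by simpa using hle⟩
    · exact h₂
  obtain ⟨t, ht, ⟨u, hu, hQu, hu₁⟩, v, hv, hQv, hv₂⟩ := isPreconnected_closed_iff.mp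
    isPreconnected_Icc _ _ (hclosed Q₁) (hclosed Q₂) hcover
    ⟨0, left_mem_Icc.mpr zero_le_one, hT₁⟩ ⟨1, right_mem_Icc.mpr zero_le_one, hT₂⟩
  obtain ⟨w, hw, hw₁, hw₂⟩ := exists_ne_zero_nonpos_and_nonpos
    (fun _ ↦ nonpos_or_nonpos_of_lineMap_nonpos ht)
    (ne_zero_of_mem_unit_sphere ⟨u, hu⟩) (ne_zero_of_mem_unit_sphere ⟨v, hv⟩) hQu hQv hu₁ hv₂
  exact (h w hw).elim hw₁.not_gt hw₂.not_gt

theorem exists_nonneg_posDef_sub_smul {P N : QuadraticForm ℝ E}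
    (h : ∀ v ≠ 0, 0 ≤ N v → 0 < P v) : ∃ α : ℝ, 0 ≤ α ∧ (P - α • N).PosDef := by
  have hPN (v : E) (hv : v ≠ 0) : 0 < P v ∨ 0 < (-N) v := by
    refine (le_or_gt 0 (N v)).imp (h v hv) fun hN ↦ ?_
    simpa using hN
  obtain ⟨t, ⟨ht0, ht1⟩, hpos⟩ := exists_mem_Ico_posDef_lineMap hPN
  have ht : 0 < 1 - t := sub_pos.mpr ht1
  refine ⟨t / (1 - t), div_nonneg ht0 ht.le, ?_⟩
  convert hpos.smul (inv_pos.mpr ht) using 1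
  rw [lineMap_apply_module, smul_add, smul_smul, smul_smul, inv_mul_cancel₀ ht.ne', one_smul,
    smul_neg, ← sub_eq_add_neg, div_eq_inv_mul]

end QuadraticForms

section Matrices

variable {m n : Type*} [Fintype m] [Fintype n]

theorem dotProduct_transpose_mul_mul_mulVec {R : Type*} [CommSemiring R] (A : Matrix m m R)
    (C : Matrix m n R) (x : n → R) :
    x ⬝ᵥ (Cᵀ * A * C) *ᵥ x = (C *ᵥ x) ⬝ᵥ A *ᵥ (C *ᵥ x) := by
  rw [← mulVec_mulVec, ← mulVec_mulVec, dotProduct_mulVec, vecMul_transpose]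

theorem dotProduct_mulVec_sq_le_of_posSemidef {P : Matrix m m ℝ} (hP : P.PosSemidef)
    (x y : m → ℝ) : (x ⬝ᵥ P *ᵥ y) ^ 2 ≤ (x ⬝ᵥ P *ᵥ x) * (y ⬝ᵥ P *ᵥ y) := by
  classical
  have hsymm : P.IsSymm := by simpa using hP.isHermitian
  have hcauchy := P.toBilin'.apply_sq_le_of_symm
    (fun z ↦ by simpa [toBilin'_apply'] using hP.dotProduct_mulVec_nonneg z)
    ⟨(isSymm_toBilin'_iff_isSymm.mpr hsymm).eq⟩ x y
  simpa only [toBilin'_apply'] using hcauchy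

/-- The witness is the rank-one matrix `T = u xᵀ P / (xᵀ P x)`, for which Cauchy–Schwarz bounds
`Tᵀ R T`. -/
theorem exists_mulVec_eq_and_posSemidef_sub {P : Matrix m m ℝ} {R : Matrix n n ℝ}
    (hP : P.PosSemidef) (hR : R.PosDef) {x : m → ℝ} {u : n → ℝ}
    (h : u ⬝ᵥ R *ᵥ u ≤ x ⬝ᵥ P *ᵥ x) :
    ∃ T : Matrix n m ℝ, T *ᵥ x = u ∧ (P - Tᵀ * R * T).PosSemidef := by
  set s := x ⬝ᵥ P *ᵥ x
  have hs : 0 ≤ s := hP.dotProduct_mulVec_nonneg x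
  rcases hs.eq_or_lt with hs0 | hs0
  · have hu : u = 0 := by
      by_contra hu
      exact (hR.dotProduct_mulVec_pos hu).not_ge (h.trans hs0.ge)
    exact ⟨0, by simp [hu], by simpa using hP⟩
  have hT (z : m → ℝ) : (s⁻¹ • vecMulVec u (x ᵥ* P)) *ᵥ z = (s⁻¹ * (x ⬝ᵥ P *ᵥ z)) • u := by
    rw [smul_mulVec, vecMulVec_mulVec, op_smul_eq_smul, smul_smul, dotProduct_mulVec]
  refine ⟨s⁻¹ • vecMulVec u (x ᵥ* P), ?_, .of_dotProduct_mulVec_nonneg ?_ fun z ↦ ?_⟩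
  · rw [hT, inv_mul_cancel₀ hs0.ne', one_smul]
  · exact hP.isHermitian.sub (isHermitian_conjTranspose_mul_mul _ hR.isHermitian)
  rw [star_trivial, sub_mulVec, dotProduct_sub, dotProduct_transpose_mul_mul_mulVec, hT, sub_nonneg]
  set c := x ⬝ᵥ P *ᵥ z
  calc ((s⁻¹ * c) • u) ⬝ᵥ R *ᵥ ((s⁻¹ * c) • u) = (s⁻¹ * c) ^ 2 * (u ⬝ᵥ R *ᵥ u) := by
        simp only [mulVec_smul, dotProduct_smul, smul_dotProduct, smul_eq_mul]
        ring
    _ ≤ (s⁻¹ * c) ^ 2 * s := by gcongr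
    _ = c ^ 2 / s := by field_simp
    _ ≤ z ⬝ᵥ P *ᵥ z := (div_le_iff₀' hs0).mpr (dotProduct_mulVec_sq_le_of_posSemidef hP x z)

theorem exists_nonneg_posDef_sub_smul_of_isSymm {M N : Matrix m m ℝ} (hM : M.IsSymm)
    (hN : N.IsSymm) (h : ∀ v ≠ 0, 0 ≤ v ⬝ᵥ N *ᵥ v → 0 < v ⬝ᵥ M *ᵥ v) :
    ∃ α : ℝ, 0 ≤ α ∧ (M - α • N).PosDef := by
  classical
  have happly (A : Matrix m m ℝ) (v : m → ℝ) : A.toQuadraticForm' v = v ⬝ᵥ A *ᵥ v := by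
    simp [toQuadraticForm', toLinearMap₂'_apply']
  obtain ⟨α, hα, hpos⟩ := exists_nonneg_posDef_sub_smul
    (P := M.toQuadraticForm') (N := N.toQuadraticForm') (by simpa only [happly] using h)
  refine ⟨α, hα, .of_toQuadraticForm' (hM.sub (hN.smul α)) fun v hv ↦ ?_⟩
  simpa [happly, sub_mulVec, smul_mulVec] using hpos v hv

theorem posDef_transpose_mul_mul_of_posDef_sub_smul {M N : Matrix m m ℝ} {C : Matrix m n ℝ}
    (hC : Function.Injective C.mulVec) {α : ℝ} (hα : 0 ≤ α) (hMN : (M - α • N).PosDef)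
    (hN : (Cᵀ * N * C).PosSemidef) : (Cᵀ * M * C).PosDef := by
  have hsum : Cᵀ * M * C = Cᵀ * (M - α • N) * C + α • (Cᵀ * N * C) := by
    simp [Matrix.mul_sub, Matrix.sub_mul]
  rw [hsum]
  exact (hMN.conjTranspose_mul_mul_same hC).add_posSemidef (hN.smul hα)

variable [DecidableEq m] [DecidableEq n]

theorem transpose_fromRows_one_mul_fromBlocks_mul_fromRows_one {R : Type*} [CommRing R]
    (A : Matrix m m R) (B : Matrix m n R) {D : Matrix n n R}
    (hD : D.IsSymm) (hu : IsUnit D) (Z : Matrix n m R) :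
    (fromRows (1 : Matrix m m R) Z)ᵀ * fromBlocks A B Bᵀ D * fromRows (1 : Matrix m m R) Z =
      (A - B * D⁻¹ * Bᵀ) + (D⁻¹ * Bᵀ + Z)ᵀ * D * (D⁻¹ * Bᵀ + Z) := by
  have hdet : IsUnit D.det := (isUnit_iff_isUnit_det D).mp hu
  rw [Matrix.mul_assoc, fromBlocks_mul_fromRows, transpose_fromRows, fromCols_mul_fromRows]
  simp only [transpose_one, transpose_add, transpose_mul, transpose_transpose,
    transpose_nonsing_inv, hD.eq, Matrix.mul_add, Matrix.add_mul, Matrix.mul_assoc, Matrix.one_mul,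
    Matrix.mul_one, mul_nonsing_inv_cancel_left _ _ hdet, nonsing_inv_mul_cancel_left _ _ hdet]
  abel

theorem exists_fromRows_one_mulVec_eq_and_posSemidef {A : Matrix m m ℝ} {B : Matrix m n ℝ}
    {D : Matrix n n ℝ} (hD : (-D).PosDef) (hS : (A - B * D⁻¹ * Bᵀ).PosSemidef) {v : m ⊕ n → ℝ}
    (hv : 0 ≤ v ⬝ᵥ fromBlocks A B Bᵀ D *ᵥ v) :
    ∃ (x : m → ℝ) (Z : Matrix n m ℝ), fromRows (1 : Matrix m m ℝ) Z *ᵥ x = v ∧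
      ((fromRows (1 : Matrix m m ℝ) Z)ᵀ * fromBlocks A B Bᵀ D *
        fromRows (1 : Matrix m m ℝ) Z).PosSemidef := by
  have hDsymm : D.IsSymm := by simpa using hD.isHermitian.neg
  have hDunit : IsUnit D := by simpa using hD.isUnit.neg
  have := hDunit.invertible
  obtain ⟨x, y, rfl⟩ : ∃ x y, v = Sum.elim x y := ⟨_, _, (Sum.elim_comp_inl_inr v).symm⟩
  set W := D⁻¹ * Bᵀ with hW
  have hxy : (W *ᵥ x + y) ⬝ᵥ (-D) *ᵥ (W *ᵥ x + y) ≤ x ⬝ᵥ (A - B * D⁻¹ * Bᵀ) *ᵥ x := by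
    have hsq := schur_complement_eq₂₂ A B x y (D := D) (by simpa using hDsymm)
    simp only [conjTranspose_eq_transpose_of_trivial, star_trivial, ← dotProduct_mulVec] at hsq
    rw [neg_mulVec, dotProduct_neg]
    linarith
  obtain ⟨T, hTx, hT⟩ := exists_mulVec_eq_and_posSemidef_sub hS hD hxy
  refine ⟨x, T - W, ?_, ?_⟩
  · rw [fromRows_mulVec, one_mulVec, sub_mulVec, hTx, add_sub_cancel_left]
  · rw [transpose_fromRows_one_mul_fromBlocks_mul_fromRows_one A B hDsymm hDunit, ← hW,
      add_sub_cancel]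
    simpa using hT

theorem stmt_7_general {M : Matrix (m ⊕ n) (m ⊕ n) ℝ} (hM : M.IsSymm)
    {N₁₁ : Matrix m m ℝ} {N₁₂ : Matrix m n ℝ} {N₂₂ : Matrix n n ℝ} (hN₂₂ : (-N₂₂).PosDef)
    (hS : (N₁₁ - N₁₂ * N₂₂⁻¹ * N₁₂ᵀ).PosSemidef) :
    (∀ Z : Matrix n m ℝ,
        ((fromRows (1 : Matrix m m ℝ) Z)ᵀ * fromBlocks N₁₁ N₁₂ N₁₂ᵀ N₂₂ *
          fromRows (1 : Matrix m m ℝ) Z).PosSemidef →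
        ((fromRows (1 : Matrix m m ℝ) Z)ᵀ * M * fromRows (1 : Matrix m m ℝ) Z).PosDef) ↔
      ∃ α : ℝ, 0 ≤ α ∧ (M - α • fromBlocks N₁₁ N₁₂ N₁₂ᵀ N₂₂).PosDef := by
  constructor
  · intro hincl
    have hN : (fromBlocks N₁₁ N₁₂ N₁₂ᵀ N₂₂).IsSymm := by
      have hN₂₂' : N₂₂.IsHermitian := by simpa using hN₂₂.isHermitian.neg
      simpa using (IsHermitian.fromBlocks₂₂ N₁₁ N₁₂ hN₂₂').mpr hS.isHermitian
    refine exists_nonneg_posDef_sub_smul_of_isSymm hM hN fun v hv hNv ↦ ?_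
    obtain ⟨x, Z, rfl, hZ⟩ := exists_fromRows_one_mulVec_eq_and_posSemidef hN₂₂ hS hNv
    have hx : x ≠ 0 := by
      rintro rfl
      exact hv (mulVec_zero _)
    simpa [dotProduct_transpose_mul_mul_mulVec] using (hincl Z hZ).dotProduct_mulVec_pos hx
  · rintro ⟨α, hα, hpos⟩ Z hZ
    have hinj : Function.Injective (fromRows (1 : Matrix m m ℝ) Z).mulVec := fun x y hxy ↦ by
      simpa [fromRows_mulVec] using congrArg (· ∘ Sum.inl) hxy
    exact posDef_transpose_mul_mul_of_posDef_sub_smul hinj hα hpos hZ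

theorem stackIZ_eq_fromRows_one {q r : ℕ} (Z : Matrix (Fin r) (Fin q) ℝ) :
    stackIZ Z = fromRows 1 Z := by
  ext (i | i) j <;> simp [stackIZ, one_apply]

end Matrices

/-- **Strict matrix S-lemma (Lemma 4.3).** With `M = [[M₁₁,M₁₂],[M₁₂ᵀ,M₂₂]]` and
`N = [[N₁₁,N₁₂],[N₁₂ᵀ,N₂₂]]` symmetric, `N₂₂ ≺ 0`, `ker N₂₂ ⊆ ker N₁₂` and the Schur
complement `N₁₁ - N₁₂ N₂₂⁻¹ N₁₂ᵀ ⪰ 0`, the inclusion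
`{Z : [I;Z]ᵀ N [I;Z] ⪰ 0} ⊆ {Z : [I;Z]ᵀ M [I;Z] ≻ 0}` holds iff `M - αN ≻ 0` for some
`α ≥ 0`. -/
theorem stmt_7 (q r : ℕ) (hq : 1 ≤ q) (hr : 1 ≤ r)
    (M11 : Matrix (Fin q) (Fin q) ℝ) (M12 : Matrix (Fin q) (Fin r) ℝ)
    (M22 : Matrix (Fin r) (Fin r) ℝ)
    (N11 : Matrix (Fin q) (Fin q) ℝ) (N12 : Matrix (Fin q) (Fin r) ℝ)
    (N22 : Matrix (Fin r) (Fin r) ℝ)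
    (hM11 : M11.IsSymm) (hM22 : M22.IsSymm) (hN11 : N11.IsSymm) (hN22s : N22.IsSymm)
    (hN22 : (-N22).PosDef)
    (hker : ∀ x : Fin r → ℝ, N22.mulVec x = 0 → N12.mulVec x = 0)
    (hschur : (N11 - N12 * N22⁻¹ * N12ᵀ).PosSemidef) :
    (∀ Z : Matrix (Fin r) (Fin q) ℝ,
        ((stackIZ Z)ᵀ * Matrix.fromBlocks N11 N12 N12ᵀ N22 * stackIZ Z).PosSemidef →
        ((stackIZ Z)ᵀ * Matrix.fromBlocks M11 M12 M12ᵀ M22 * stackIZ Z).PosDef) ↔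
      ∃ α : ℝ, 0 ≤ α ∧
        (Matrix.fromBlocks M11 M12 M12ᵀ M22 -
          α • Matrix.fromBlocks N11 N12 N12ᵀ N22).PosDef := by
  simpa only [stackIZ_eq_fromRows_one] using
    stmt_7_general (isSymm_fromBlocks_iff.mpr ⟨hM11, rfl, rfl, hM22⟩) hN22 hschur
end

section
/- Let L ∈ ℕ with L ≥ 1, let m, p ≥ 1, set q := m + p and n := qL. Let Π ∈ ℝ^{(p+n)×(p+n)} be symmetric with (2,2)-block Π₂₂ ∈ ℝ^{n×n} negative definite, and assume there exists R_s ∈ ℝ^{p×n} such that [I_p; R_s^⊤]^⊤ Π [I_p; R_s^⊤] is positive semidefinite. Define the consistent set Σ := { R ∈ ℝ^{p×n} : [I_p; R^⊤]^⊤ Π [I_p; R^⊤] is positive semidefinite }. Define J_p := [0_{p×(n−p)} I_p] ∈ ℝ^{p×n}, T := [[J_p, 0_{p×n}],[0_{n×n}, I_n]] ∈ ℝ^{(p+n)×2n}, N := T^⊤ Π T ∈ ℝ^{2n×2n}, and J_{q(L−1)} := [0_{q(L−1)×q} I_{q(L−1)}] ∈ ℝ^{q(L−1)×n}. Then the following are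 equivalent: (i) there exist a symmetric positive definite Ψ ∈ ℝ^{n×n} and C ∈ ℝ^{m×n} such that for every R ∈ Σ, the matrix A_R^⊤ Ψ + Ψ A_R is positive definite, where A_R ∈ ℝ^{n×n} is obtained by stacking the rows of −J_{q(L−1)}, of C, and of R; (ii) there exist a symmetric positive definite Φ ∈ ℝ^{n×n} and D ∈ ℝ^{m×n} such that the 2n×2n matrix [[E^⊤ + E, Φ],[Φ, 0_{n×n}]] − N is positive definite, where E ∈ ℝ^{n×n} is obtained by stacking the rows of −J_{q(L−1)}Φ, of D, and of 0_{p×n}. Moreover, if (ii) holds, then with C := DΦ^{−1} and Ψ := Φ^{−1}, the matrix A_R^⊤ Ψ + Ψ A_R is positive definite for every R ∈ Σ. -/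
open Matrix

/-- Index type for `ℝ^{qL}`, `q = m+p`: block `ℓ ∈ {0,…,L-1}`, then input/output
component. -/
abbrev Idx (L m p : ℕ) := Fin L × (Fin m ⊕ Fin p)

/-- The `(p+n) × p` matrix `[I_p; Rᵀ]` obtained by stacking `I_p` on top of `Rᵀ`. -/
def stackIp {L m p : ℕ} (R : Matrix (Fin p) (Idx L m p) ℝ) :
    Matrix (Fin p ⊕ Idx L m p) (Fin p) ℝ :=
  Matrix.of (Sum.elim (fun a j => if a = j then (1 : ℝ) else 0) (fun b j => R j b))

/-- `J_p = [0_{p×(n-p)} I_p] ∈ ℝ^{p×n}`: selects the last `p` coordinates. -/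
def JpM (L m p : ℕ) : Matrix (Fin p) (Idx L m p) ℝ :=
  Matrix.of fun i c => if (c.1 : ℕ) + 1 = L ∧ c.2 = Sum.inr i then 1 else 0

/-- `A_R = [-J_{q(L-1)}; C; R] ∈ ℝ^{n×n}`: rows of `-J_{q(L-1)} = -[0 I_{q(L-1)}]`,
then rows of `C`, then rows of `R`. -/
def AmatCR (L m p : ℕ) (C : Matrix (Fin m) (Idx L m p) ℝ)
    (R : Matrix (Fin p) (Idx L m p) ℝ) : Matrix (Idx L m p) (Idx L m p) ℝ :=
  Matrix.of fun r c =>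
    if (r.1 : ℕ) + 1 < L then
      (if (c.1 : ℕ) = (r.1 : ℕ) + 1 ∧ c.2 = r.2 then -1 else 0)
    else Sum.elim (fun a => C a c) (fun b => R b c) r.2

/-- `E = [-J_{q(L-1)} Φ; D; 0_{p×n}] ∈ ℝ^{n×n}`. -/
def EmatPhi (L m p : ℕ) (Φ : Matrix (Idx L m p) (Idx L m p) ℝ)
    (D : Matrix (Fin m) (Idx L m p) ℝ) : Matrix (Idx L m p) (Idx L m p) ℝ :=
  Matrix.of fun r c =>
    if h : (r.1 : ℕ) + 1 < L then -Φ (⟨(r.1 : ℕ) + 1, h⟩, r.2) c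
    else Sum.elim (fun a => D a c) (fun _ => (0 : ℝ)) r.2

/-!
For fixed `Φ = Ψ⁻¹`, a congruence turns the Lyapunov inequality of `A_R` into positivity of
`[[Eᵀ + E, Φ], [Φ, 0]]` on the range of `[I; Rᵀ J_p]`, and `N` is positive semidefinite on the
range of `[I; Rᵀ J_p]` whenever `R ∈ Σ`; so the linear matrix inequality suffices. Conversely, every
`(x, y) ≠ 0` at which the form of `N` is nonnegative lies in the range of `[I; Rᵀ J_p]` for some
`R ∈ Σ`: since `Π₂₂` is negative definite, a solution of the quadratic matrix inequality with
`Rᵀ (J_p x) = y` is a rank-one correction of the least-squares solution. Hence the first form is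
positive wherever the second is nonnegative, and the S-lemma supplies a multiplier `c > 0` with
`[[Eᵀ + E, Φ], [Φ, 0]] - c N` positive definite; it is absorbed by rescaling `Φ`.
-/

open QuadraticMap (polar)

section SLemma

variable {V : Type*}

theorem quadraticForm_smul_add_smul {R : Type*} [CommRing R] [AddCommGroup V] [Module R V]
    (Q : QuadraticForm R V) (s t : R) (x y : V) :
    Q (s • x + t • y) = s ^ 2 * Q x + s * t * polar Q x y + t ^ 2 * Q y := by
  rw [QuadraticMap.map_add Q, QuadraticMap.polar_smul_left, QuadraticMap.polar_smul_right,
    QuadraticMap.map_smul, QuadraticMap.map_smul]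
  simp only [smul_eq_mul]
  ring

-- After a sign change of `x` the polar form is nonpositive, so `F ≤ 0` on the whole segment
-- from `x` to `y`, along which `B` changes sign.
theorem exists_ne_zero_map_nonpos_map_eq_zero [AddCommGroup V] [Module ℝ V]
    (F B : QuadraticForm ℝ V) {x y : V} (hy : y ≠ 0) (hFx : F x ≤ 0) (hFy : F y ≤ 0)
    (hBx : B x < 0) (hBy : 0 ≤ B y) : ∃ z ≠ 0, F z ≤ 0 ∧ B z = 0 := by
  wlog hpolar : polar F x y ≤ 0 generalizing x
  · refine this (x := -x) (by rwa [F.map_neg]) (by rwa [B.map_neg]) ?_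
    rw [QuadraticMap.polar_neg_left]
    linarith
  have hcont : Continuous fun t : ℝ => B ((1 - t) • x + t • y) := by
    simp only [quadraticForm_smul_add_smul]
    fun_prop
  obtain ⟨t, ⟨ht0, ht1⟩, hBt⟩ := intermediate_value_Icc zero_le_one hcont.continuousOn
    (show (0 : ℝ) ∈ Set.Icc _ _ from ⟨by simpa using hBx.le, by simpa using hBy⟩)
  refine ⟨(1 - t) • x + t • y, fun hz => ?_, ?_, hBt⟩
  · have hB : (1 - t) ^ 2 * B x = t ^ 2 * B y := by
      simpa [QuadraticMap.map_smul, ← sq] using congrArg B (eq_neg_of_add_eq_zero_left hz)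
    obtain rfl : t = 1 := by
      by_contra ht
      have : 0 < (1 - t) ^ 2 := sq_pos_of_ne_zero (sub_ne_zero.2 (Ne.symm ht))
      nlinarith [mul_nonneg (sq_nonneg t) hBy]
    exact hy (by simpa using hz)
  · rw [quadraticForm_smul_add_smul]
    have hxx := mul_nonpos_of_nonneg_of_nonpos (sq_nonneg (1 - t)) hFx
    have hxy := mul_nonpos_of_nonneg_of_nonpos (mul_nonneg (sub_nonneg.2 ht1) ht0) hpolar
    have hyy := mul_nonpos_of_nonneg_of_nonpos (sq_nonneg t) hFy
    linarith

variable [NormedAddCommGroup V] [NormedSpace ℝ V] [FiniteDimensional ℝ V]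

theorem continuous_quadraticForm_s9 (Q : QuadraticForm ℝ V) : Continuous Q := by
  have hQ : ⇑Q = fun x => (QuadraticMap.associated Q).toContinuousBilinearMap x x := by
    ext x
    exact (QuadraticMap.associated_eq_self_apply ℝ Q x).symm
  rw [hQ]
  fun_prop

theorem exists_isMaxOn_div_of_pos (P Q : QuadraticForm ℝ V)
    (hPQ : ∀ z ≠ 0, 0 ≤ P z → 0 < Q z) (hP : ∃ z ≠ 0, 0 ≤ P z) :
    ∃ x, (x ≠ 0 ∧ 0 ≤ P x) ∧ IsMaxOn (fun z => P z / Q z) {z | z ≠ 0 ∧ 0 ≤ P z} x := by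
  set K : Set V := Metric.sphere 0 1 ∩ {z | 0 ≤ P z}
  have ne_zero_of_mem {z : V} (hz : z ∈ K) : z ≠ 0 := Metric.ne_of_mem_sphere hz.1 one_ne_zero
  have normalize_mem {z : V} (hz : z ≠ 0) (hPz : 0 ≤ P z) : ‖z‖⁻¹ • z ∈ K := by
    refine ⟨by simp [norm_smul, hz], ?_⟩
    rw [Set.mem_ofPred_eq, QuadraticMap.map_smul]
    exact smul_nonneg (mul_self_nonneg _) hPz
  have hcompact : IsCompact K :=
    (isCompact_sphere _ _).inter_right (isClosed_le continuous_const (continuous_quadraticForm_s9 P))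
  have hcont : ContinuousOn (fun z => P z / Q z) K :=
    (continuous_quadraticForm_s9 P).continuousOn.div (continuous_quadraticForm_s9 Q).continuousOn
      fun z hz => (hPQ z (ne_zero_of_mem hz) hz.2).ne'
  obtain ⟨z₀, hz₀, hPz₀⟩ := hP
  obtain ⟨x, hxK, hmax⟩ := hcompact.exists_isMaxOn ⟨_, normalize_mem hz₀ hPz₀⟩ hcont
  refine ⟨x, ⟨ne_zero_of_mem hxK, hxK.2⟩, fun z ⟨hz, hPz⟩ => ?_⟩
  have hscale : 0 < ‖z‖⁻¹ * ‖z‖⁻¹ := by positivity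
  simpa [QuadraticMap.map_smul, mul_div_mul_left _ _ hscale.ne'] using hmax (normalize_mem hz hPz)

theorem exists_sharp_map_le_mul (P Q : QuadraticForm ℝ V)
    (hPQ : ∀ z ≠ 0, 0 ≤ P z → 0 < Q z) :
    ∃ c ≥ 0, (∀ z, 0 ≤ P z → P z ≤ c * Q z) ∧
      (c ≠ 0 → ∃ x ≠ 0, 0 ≤ P x ∧ P x = c * Q x) := by
  by_cases hP : ∃ z ≠ 0, 0 ≤ P z
  · obtain ⟨x, ⟨hx, hPx⟩, hmax⟩ := exists_isMaxOn_div_of_pos P Q hPQ hP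
    have hQx := hPQ x hx hPx
    refine ⟨P x / Q x, by positivity, fun z hPz => ?_, fun _ => ⟨x, hx, hPx, ?_⟩⟩
    · obtain rfl | hz := eq_or_ne z 0
      · simp
      · exact (div_le_iff₀ (hPQ z hz hPz)).1 (hmax ⟨hz, hPz⟩)
    · field_simp
  · refine ⟨0, le_rfl, fun z hPz => ?_, fun h => absurd rfl h⟩
    obtain rfl : z = 0 := by_contra fun hz => hP ⟨z, hz, hPz⟩
    simp

-- Let `a` and `b` be the least constants with `a * B ≤ A` on `{A ≤ 0}` and `B ≤ b * A` on
-- `{B ≥ 0}`. If `1 ≤ a * b`, then `A - a • B` is nonpositive at the vectors attaining them, so it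
-- is nonpositive at some zero of `B`. Hence `a * b < 1`, and any `c > a` with `c * b < 1` works.
theorem exists_pos_posDef_sub_smul (A B : QuadraticForm ℝ V)
    (h : ∀ z ≠ 0, 0 ≤ B z → 0 < A z) : ∃ c : ℝ, 0 < c ∧ (A - c • B).PosDef := by
  have h' : ∀ z ≠ 0, A z ≤ 0 → B z < 0 := fun z hz hA =>
    not_le.1 fun hB => (h z hz hB).not_ge hA
  obtain ⟨a, ha0, ha, ha_attained⟩ :=
    exists_sharp_map_le_mul (-A) (-B) (by simpa using h')
  obtain ⟨b, hb0, hb, hb_attained⟩ := exists_sharp_map_le_mul B A h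
  have hab : a * b < 1 := by
    by_contra! hab
    obtain ⟨x, hx, hAx, hABx⟩ := ha_attained (by rintro rfl; linarith)
    obtain ⟨y, hy, hBy, hBAy⟩ := hb_attained (by rintro rfl; linarith)
    simp only [_root_.neg_apply, neg_nonneg] at hAx hABx
    have hFx : (A - a • B) x ≤ 0 := by
      simp only [_root_.sub_apply, _root_.smul_apply, smul_eq_mul]
      linarith
    have hFy : (A - a • B) y ≤ 0 := by
      simp only [_root_.sub_apply, _root_.smul_apply, smul_eq_mul, hBAy]
      nlinarith [h y hy hBy]
    obtain ⟨z, hz, hFz, hBz⟩ :=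
      exists_ne_zero_map_nonpos_map_eq_zero (A - a • B) B hy hFx hFy (h' x hx hAx) hBy
    simp only [_root_.sub_apply, _root_.smul_apply, hBz, smul_zero, sub_zero] at hFz
    exact (h z hz hBz.ge).not_ge hFz
  have hcont : Continuous fun c : ℝ => c * b := by fun_prop
  obtain ⟨c, hac, hcb⟩ : ∃ c > a, c * b < 1 :=
    (hcont.tendsto a |>.eventually_lt_const hab).exists_gt
  refine ⟨c, ha0.trans_lt hac, fun z hz => ?_⟩
  simp only [_root_.sub_apply, _root_.smul_apply, smul_eq_mul, sub_pos]
  rcases le_or_gt (A z) 0 with hA | hA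
  · have haz := ha z (by simpa using hA)
    simp only [_root_.neg_apply] at haz
    nlinarith [h' z hz hA]
  rcases lt_or_ge (B z) 0 with hB | hB
  · nlinarith
  · nlinarith [hb z hB]

end SLemma

section QuadraticMatrixInequality

variable {ι κ : Type*}

theorem dotProduct_transpose_mul_mul_mulVec_s9 {R : Type*} [CommSemiring R] [Fintype ι] [Fintype κ]
    (T : Matrix ι κ R) (P : Matrix ι ι R) (v : κ → R) :
    v ⬝ᵥ (Tᵀ * P * T) *ᵥ v = (T *ᵥ v) ⬝ᵥ P *ᵥ (T *ᵥ v) := by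
  rw [← mulVec_mulVec, ← mulVec_mulVec, dotProduct_transpose_mulVec, dotProduct_comm]

theorem exists_pos_posDef_sub_smul_of_isSymm [Fintype ι] {A B : Matrix ι ι ℝ}
    (hA : A.IsSymm) (hB : B.IsSymm) (h : ∀ z ≠ 0, 0 ≤ z ⬝ᵥ B *ᵥ z → 0 < z ⬝ᵥ A *ᵥ z) :
    ∃ c : ℝ, 0 < c ∧ (A - c • B).PosDef := by
  classical
  have form_apply (M : Matrix ι ι ℝ) (z : ι → ℝ) : M.toQuadraticForm' z = z ⬝ᵥ M *ᵥ z := by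
    simp [toQuadraticForm', toLinearMap₂'_apply']
  obtain ⟨c, hc, hpos⟩ := exists_pos_posDef_sub_smul A.toQuadraticForm' B.toQuadraticForm'
    (by simpa only [form_apply] using h)
  refine ⟨c, hc, .of_toQuadraticForm' (hA.sub (hB.smul c)) fun z hz => ?_⟩
  simpa [form_apply, sub_mulVec, smul_mulVec] using hpos z hz

theorem sq_dotProduct_mulVec_le [Fintype κ] {S : Matrix κ κ ℝ} (hS : S.PosSemidef)
    (u v : κ → ℝ) : (u ⬝ᵥ S *ᵥ v) ^ 2 ≤ (u ⬝ᵥ S *ᵥ u) * (v ⬝ᵥ S *ᵥ v) := by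
  classical
  have hcomm : v ⬝ᵥ S *ᵥ u = u ⬝ᵥ S *ᵥ v := by
    rw [← dotProduct_transpose_mulVec, ← conjTranspose_eq_transpose_of_trivial, hS.1.eq]
  simpa [sq, toLinearMap₂'_apply', hcomm] using
    LinearMap.BilinForm.apply_mul_apply_le_of_forall_zero_le (toLinearMap₂' ℝ S)
      (fun x => by simpa [toLinearMap₂'_apply'] using hS.dotProduct_mulVec_nonneg x) u v

theorem sq_inv_mul_dotProduct_mul_le [Fintype κ] {S : Matrix κ κ ℝ} (hS : S.PosSemidef)
    (u v : κ → ℝ) :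
    ((v ⬝ᵥ S *ᵥ v)⁻¹ * (u ⬝ᵥ S *ᵥ v)) ^ 2 * (v ⬝ᵥ S *ᵥ v) ≤ u ⬝ᵥ S *ᵥ u := by
  have hcs := sq_dotProduct_mulVec_le hS u v
  have hu : 0 ≤ u ⬝ᵥ S *ᵥ u := by simpa using hS.dotProduct_mulVec_nonneg u
  have hv : 0 ≤ v ⬝ᵥ S *ᵥ v := by simpa using hS.dotProduct_mulVec_nonneg v
  set σ := v ⬝ᵥ S *ᵥ v
  calc (σ⁻¹ * (u ⬝ᵥ S *ᵥ v)) ^ 2 * σ = σ⁻¹ * (u ⬝ᵥ S *ᵥ v) ^ 2 := by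
        obtain h0 | h0 := eq_or_ne σ 0
        · simp [h0]
        · field_simp
    _ ≤ σ⁻¹ * ((u ⬝ᵥ S *ᵥ u) * σ) := by gcongr
    _ = (u ⬝ᵥ S *ᵥ u) * (σ⁻¹ * σ) := by ring
    _ ≤ u ⬝ᵥ S *ᵥ u := mul_le_of_le_one_right hu inv_mul_le_one

theorem conjTranspose_toBlocks₁₂ {P : Matrix (κ ⊕ ι) (κ ⊕ ι) ℝ} (hP : P.IsSymm) :
    P.toBlocks₁₂ᴴ = P.toBlocks₂₁ := by
  ext i j
  exact hP.apply (Sum.inr i) (Sum.inl j)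

theorem isHermitian_toBlocks₂₂ {P : Matrix (κ ⊕ ι) (κ ⊕ ι) ℝ} (hP : P.IsSymm) :
    P.toBlocks₂₂.IsHermitian :=
  isHermitian_iff_isSymm.2 (hP.submatrix Sum.inr)

/-- The Schur complement of the lower right block of `P`. -/
noncomputable def schurComplement [Fintype ι] [DecidableEq ι]
    (P : Matrix (κ ⊕ ι) (κ ⊕ ι) ℝ) : Matrix κ κ ℝ :=
  P.toBlocks₁₁ - P.toBlocks₁₂ * P.toBlocks₂₂⁻¹ * P.toBlocks₂₁

theorem dotProduct_mulVec_sumElim_eq_schurComplement_add [Fintype ι] [DecidableEq ι] [Fintype κ]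
    {P : Matrix (κ ⊕ ι) (κ ⊕ ι) ℝ} (hP : P.IsSymm) (hu : IsUnit P.toBlocks₂₂)
    (x : κ → ℝ) (y : ι → ℝ) :
    Sum.elim x y ⬝ᵥ P *ᵥ Sum.elim x y = x ⬝ᵥ schurComplement P *ᵥ x +
      ((P.toBlocks₂₂⁻¹ * P.toBlocks₂₁) *ᵥ x + y) ⬝ᵥ P.toBlocks₂₂ *ᵥ
        ((P.toBlocks₂₂⁻¹ * P.toBlocks₂₁) *ᵥ x + y) := by
  let := hu.invertible
  have hschur := schur_complement_eq₂₂ P.toBlocks₁₁ P.toBlocks₁₂ x y (isHermitian_toBlocks₂₂ hP)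
  rw [conjTranspose_toBlocks₁₂ hP, fromBlocks_toBlocks] at hschur
  simpa only [schurComplement, star_trivial, ← dotProduct_mulVec, add_comm] using hschur

theorem isHermitian_schurComplement [Fintype ι] [DecidableEq ι]
    {P : Matrix (κ ⊕ ι) (κ ⊕ ι) ℝ} (hP : P.IsSymm) : (schurComplement P).IsHermitian := by
  have h₁₁ : P.toBlocks₁₁.IsHermitian := isHermitian_iff_isSymm.2 (hP.submatrix Sum.inl)
  rw [schurComplement, ← conjTranspose_toBlocks₁₂ hP]
  exact h₁₁.sub (isHermitian_mul_mul_conjTranspose _ (isHermitian_toBlocks₂₂ hP).inv)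

variable [Fintype κ] [DecidableEq κ]

/-- The matrix `[I; Z]` obtained by stacking the identity on top of `Z`. -/
def stackOne (Z : Matrix ι κ ℝ) : Matrix (κ ⊕ ι) κ ℝ :=
  fromRows 1 Z

theorem stackOne_mulVec (Z : Matrix ι κ ℝ) (v : κ → ℝ) :
    stackOne Z *ᵥ v = Sum.elim v (Z *ᵥ v) := by
  rw [stackOne, fromRows_mulVec, one_mulVec]

variable [Fintype ι]

/-- The solutions `Z` of the quadratic matrix inequality `[I; Z]ᵀ P [I; Z] ⪰ 0`. For `P = Π` they
are the transposes of the elements of the consistent set `Σ`. -/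
def qmiSolutions (P : Matrix (κ ⊕ ι) (κ ⊕ ι) ℝ) : Set (Matrix ι κ ℝ) :=
  {Z | ((stackOne Z)ᵀ * P * stackOne Z).PosSemidef}

variable {P : Matrix (κ ⊕ ι) (κ ⊕ ι) ℝ}

theorem mem_qmiSolutions_iff (hP : P.IsSymm) {Z : Matrix ι κ ℝ} :
    Z ∈ qmiSolutions P ↔ ∀ u, 0 ≤ Sum.elim u (Z *ᵥ u) ⬝ᵥ P *ᵥ Sum.elim u (Z *ᵥ u) := by
  have hherm : ((stackOne Z)ᵀ * P * stackOne Z).IsHermitian :=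
    isHermitian_conjTranspose_mul_mul (stackOne Z) (isHermitian_iff_isSymm.2 hP)
  simp only [qmiSolutions, Set.mem_ofPred_eq, posSemidef_iff_dotProduct_mulVec, hherm, true_and,
    star_trivial, dotProduct_transpose_mul_mul_mulVec_s9, stackOne_mulVec]

theorem posSemidef_schurComplement [DecidableEq ι] (hP : P.IsSymm)
    (hneg : (-P.toBlocks₂₂).PosDef) (hne : (qmiSolutions P).Nonempty) :
    (schurComplement P).PosSemidef := by
  obtain ⟨Z₀, hZ₀⟩ := hne
  refine .of_dotProduct_mulVec_nonneg (isHermitian_schurComplement hP) fun x => ?_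
  have hform := (mem_qmiSolutions_iff hP).1 hZ₀ x
  rw [dotProduct_mulVec_sumElim_eq_schurComplement_add hP (by simpa using hneg.isUnit.neg)] at hform
  have hw := hneg.posSemidef.dotProduct_mulVec_nonneg
    ((P.toBlocks₂₂⁻¹ * P.toBlocks₂₁) *ᵥ x + Z₀ *ᵥ x)
  simp only [star_trivial, neg_mulVec, dotProduct_neg] at hw ⊢
  linarith

-- With `S` the Schur complement and `w = K v + y` the deviation of `y` from the minimizer `-K v`,
-- the rank-one correction `w (S v)ᵀ / (v ⬝ S v)` of `-K` is admissible by Cauchy–Schwarz. If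
-- `v ⬝ S v = 0` then `w = 0`, so that the junk value `0⁻¹ = 0` is harmless.
theorem exists_mem_qmiSolutions_mulVec_eq (hP : P.IsSymm) (hneg : (-P.toBlocks₂₂).PosDef)
    (hne : (qmiSolutions P).Nonempty) {v : κ → ℝ} {y : ι → ℝ}
    (h : 0 ≤ Sum.elim v y ⬝ᵥ P *ᵥ Sum.elim v y) : ∃ Z ∈ qmiSolutions P, Z *ᵥ v = y := by
  classical
  set S := schurComplement P
  set D := P.toBlocks₂₂
  set K := D⁻¹ * P.toBlocks₂₁
  have hS : S.PosSemidef := posSemidef_schurComplement hP hneg hne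
  have hform := dotProduct_mulVec_sumElim_eq_schurComplement_add hP (by simpa using hneg.isUnit.neg)
  set w := K *ᵥ v + y with hw
  set σ := v ⬝ᵥ S *ᵥ v with hσ
  have hwσ : -(w ⬝ᵥ D *ᵥ w) ≤ σ := by
    rw [hform] at h
    linarith
  have hw0 (h0 : σ = 0) : w = 0 := by
    by_contra hw
    have hpos := hneg.dotProduct_mulVec_pos hw
    simp only [star_trivial, neg_mulVec, dotProduct_neg] at hpos
    linarith
  set Z := σ⁻¹ • vecMulVec w (S *ᵥ v) - K with hZdef
  have hZ (u : κ → ℝ) : K *ᵥ u + Z *ᵥ u = (σ⁻¹ * (u ⬝ᵥ S *ᵥ v)) • w := by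
    simp [hZdef, sub_mulVec, smul_mulVec, vecMulVec_mulVec, dotProduct_comm u, mul_smul]
  refine ⟨Z, (mem_qmiSolutions_iff hP).2 fun u => ?_, ?_⟩
  · rw [hform, hZ]
    simp only [mulVec_smul, smul_dotProduct, dotProduct_smul, smul_eq_mul]
    nlinarith [sq_inv_mul_dotProduct_mul_le hS u v,
      mul_le_mul_of_nonneg_left hwσ (sq_nonneg (σ⁻¹ * (u ⬝ᵥ S *ᵥ v)))]
  · have hZv : K *ᵥ v + Z *ᵥ v = w := by
      rw [hZ, ← hσ]
      obtain h0 | h0 := eq_or_ne σ 0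
      · simp [hw0 h0]
      · rw [inv_mul_cancel₀ h0, one_smul]
    simpa [hw] using hZv

end QuadraticMatrixInequality

section RobustLyapunov

variable {κ ν : Type*} [Fintype κ] [Fintype ν] [DecidableEq ν] {J : Matrix κ ν ℝ}
  {A Φ : Matrix ν ν ℝ}

theorem posDef_lyapunov_inv_iff (hΦ : Φ.PosDef) :
    (Aᵀ * Φ⁻¹ + Φ⁻¹ * A).PosDef ↔ ((A * Φ)ᵀ + A * Φ).PosDef := by
  rw [← IsUnit.posDef_star_left_conjugate_iff hΦ.isUnit]
  have hdet : IsUnit Φ.det := (isUnit_iff_isUnit_det Φ).1 hΦ.isUnit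
  have hcongr : star Φ * (Aᵀ * Φ⁻¹ + Φ⁻¹ * A) * Φ = (A * Φ)ᵀ + A * Φ := by
    rw [star_eq_conjTranspose, hΦ.1.eq, transpose_mul, ← conjTranspose_eq_transpose_of_trivial Φ,
      hΦ.1.eq, mul_add, add_mul, ← mul_assoc Φ Φ⁻¹ A, mul_nonsing_inv _ hdet, one_mul, mul_assoc,
      mul_assoc, nonsing_inv_mul _ hdet, mul_one]
  rw [hcongr]

theorem transpose_stackOne_mul_fromBlocks_mul (hΦ : Φ.IsSymm) (Z : Matrix ν κ ℝ) :
    (stackOne (Z * J))ᵀ * fromBlocks ((A * Φ)ᵀ + A * Φ) Φ Φ 0 * stackOne (Z * J) =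
      ((A + Jᵀ * Zᵀ) * Φ)ᵀ + (A + Jᵀ * Zᵀ) * Φ := by
  simp only [stackOne, transpose_fromRows, fromCols_mul_fromBlocks, fromCols_mul_fromRows,
    transpose_mul, transpose_add, transpose_transpose, transpose_one, hΦ.eq, one_mul, mul_one,
    mul_zero, add_zero]
  noncomm_ring

/-- The matrix `[[J, 0], [0, I]]` of the map `(x, y) ↦ (J x, y)`, which is `T` for `J = J_p`. -/
def liftBlock (J : Matrix κ ν ℝ) : Matrix (κ ⊕ ν) (ν ⊕ ν) ℝ :=
  fromBlocks J 0 0 1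

/-- The matrix `[[Eᵀ + E, Φ], [Φ, 0]] - Tᵀ P T`, `T = liftBlock J`, of the linear matrix
inequality certifying that `(A + Jᵀ Zᵀ) Φ` has positive definite symmetric part for every solution
`Z` of the quadratic matrix inequality of `P`, where `E = A Φ`. -/
def robustLMI (J : Matrix κ ν ℝ) (P : Matrix (κ ⊕ ν) (κ ⊕ ν) ℝ) (E Φ : Matrix ν ν ℝ) :
    Matrix (ν ⊕ ν) (ν ⊕ ν) ℝ :=
  fromBlocks (Eᵀ + E) Φ Φ 0 - (liftBlock J)ᵀ * P * liftBlock J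

variable [DecidableEq κ] {P : Matrix (κ ⊕ ν) (κ ⊕ ν) ℝ}

theorem liftBlock_mul_stackOne (J : Matrix κ ν ℝ) (Z : Matrix ν κ ℝ) :
    liftBlock J * stackOne (Z * J) = stackOne Z * J := by
  simp [liftBlock, stackOne, fromBlocks_mul_fromRows, fromRows_mul]

theorem transpose_stackOne_mul_robustLMI_mul (hΦ : Φ.IsSymm) (Z : Matrix ν κ ℝ) :
    (stackOne (Z * J))ᵀ * robustLMI J P (A * Φ) Φ * stackOne (Z * J) =
      ((A + Jᵀ * Zᵀ) * Φ)ᵀ + (A + Jᵀ * Zᵀ) * Φ -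
        Jᵀ * ((stackOne Z)ᵀ * P * stackOne Z) * J := by
  rw [robustLMI, Matrix.mul_sub, Matrix.sub_mul, transpose_stackOne_mul_fromBlocks_mul hΦ]
  congr 1
  calc (stackOne (Z * J))ᵀ * ((liftBlock J)ᵀ * P * liftBlock J) * stackOne (Z * J)
      = (liftBlock J * stackOne (Z * J))ᵀ * P * (liftBlock J * stackOne (Z * J)) := by
        simp only [transpose_mul, Matrix.mul_assoc]
    _ = Jᵀ * ((stackOne Z)ᵀ * P * stackOne Z) * J := by
        simp only [liftBlock_mul_stackOne, transpose_mul, Matrix.mul_assoc]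

theorem posDef_lyapunov_of_posDef_robustLMI (hΦ : Φ.PosDef)
    (hLMI : (robustLMI J P (A * Φ) Φ).PosDef) {Z : Matrix ν κ ℝ} (hZ : Z ∈ qmiSolutions P) :
    ((A + Jᵀ * Zᵀ)ᵀ * Φ⁻¹ + Φ⁻¹ * (A + Jᵀ * Zᵀ)).PosDef := by
  have hinj : Function.Injective (stackOne (Z * J)).mulVec := fun u v huv => by
    simpa [stackOne_mulVec] using congrArg (· ∘ Sum.inl) huv
  have hpos := (hLMI.conjTranspose_mul_mul_same hinj).add_posSemidef
    (PosSemidef.conjTranspose_mul_mul_same hZ J)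
  rw [conjTranspose_eq_transpose_of_trivial, conjTranspose_eq_transpose_of_trivial,
    transpose_stackOne_mul_robustLMI_mul (isHermitian_iff_isSymm.1 hΦ.1), sub_add_cancel] at hpos
  exact (posDef_lyapunov_inv_iff hΦ).2 hpos

theorem exists_stackOne_mulVec_eq (hP : P.IsSymm) (hneg : (-P.toBlocks₂₂).PosDef)
    (hne : (qmiSolutions P).Nonempty) {z : ν ⊕ ν → ℝ} (hz : z ≠ 0)
    (h : 0 ≤ z ⬝ᵥ ((liftBlock J)ᵀ * P * liftBlock J) *ᵥ z) :
    ∃ Z ∈ qmiSolutions P, ∃ x ≠ 0, stackOne (Z * J) *ᵥ x = z := by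
  obtain ⟨x, y, rfl⟩ : ∃ x y, z = Sum.elim x y := ⟨_, _, (Sum.elim_comp_inl_inr z).symm⟩
  have hT : liftBlock J *ᵥ Sum.elim x y = Sum.elim (J *ᵥ x) y := by
    simp [liftBlock, fromBlocks_mulVec]
  rw [dotProduct_transpose_mul_mul_mulVec_s9, hT] at h
  obtain ⟨Z, hZ, hZy⟩ := exists_mem_qmiSolutions_mulVec_eq hP hneg hne h
  refine ⟨Z, hZ, x, ?_, by rw [stackOne_mulVec, ← mulVec_mulVec, hZy]⟩
  rintro rfl
  have hy : y = 0 := by simpa using hZy.symm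
  exact hz (by simp [hy])

theorem exists_pos_posDef_robustLMI_smul (hP : P.IsSymm) (hneg : (-P.toBlocks₂₂).PosDef)
    (hne : (qmiSolutions P).Nonempty) (hΦ : Φ.PosDef)
    (h : ∀ Z ∈ qmiSolutions P, ((A + Jᵀ * Zᵀ)ᵀ * Φ⁻¹ + Φ⁻¹ * (A + Jᵀ * Zᵀ)).PosDef) :
    ∃ c : ℝ, 0 < c ∧ (robustLMI J P (A * c • Φ) (c • Φ)).PosDef := by
  have hΦs : Φ.IsSymm := isHermitian_iff_isSymm.1 hΦ.1
  have hN : ((liftBlock J)ᵀ * P * liftBlock J).IsSymm := by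
    simp [IsSymm, transpose_mul, hP.eq, Matrix.mul_assoc]
  have hM : (fromBlocks ((A * Φ)ᵀ + A * Φ) Φ Φ 0).IsSymm :=
    .fromBlocks (by simp [IsSymm, add_comm]) hΦs isSymm_zero
  obtain ⟨c, hc, hpos⟩ := exists_pos_posDef_sub_smul_of_isSymm hM hN fun z hz hNz => by
    obtain ⟨Z, hZ, x, hx, rfl⟩ := exists_stackOne_mulVec_eq hP hneg hne hz hNz
    rw [← dotProduct_transpose_mul_mul_mulVec_s9, transpose_stackOne_mul_fromBlocks_mul hΦs]
    exact ((posDef_lyapunov_inv_iff hΦ).1 (h Z hZ)).dotProduct_mulVec_pos hx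
  refine ⟨c⁻¹, inv_pos.2 hc, ?_⟩
  convert hpos.smul (inv_pos.2 hc) using 1
  simp [robustLMI, smul_sub, fromBlocks_smul, smul_smul, hc.ne']

end RobustLyapunov

section Specialization

variable {L m p : ℕ}

theorem stackIp_eq_stackOne (R : Matrix (Fin p) (Idx L m p) ℝ) : stackIp R = stackOne Rᵀ := by
  ext (a | b) j <;> simp [stackIp, stackOne, one_apply]

theorem amatCR_eq_add (C : Matrix (Fin m) (Idx L m p) ℝ) (R : Matrix (Fin p) (Idx L m p) ℝ) :
    AmatCR L m p C R = AmatCR L m p C 0 + (JpM L m p)ᵀ * R := by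
  ext ⟨i, r⟩ c
  have hne : (i : ℕ) + 1 < L → (i : ℕ) + 1 ≠ L := Nat.ne_of_lt
  have heq : ¬(i : ℕ) + 1 < L → (i : ℕ) + 1 = L := by omega
  by_cases h : (i : ℕ) + 1 < L <;> rcases r with a | b <;>
    simp [AmatCR, JpM, mul_apply, h, hne, heq]

theorem amatCR_zero_mul (C : Matrix (Fin m) (Idx L m p) ℝ) (Φ : Matrix (Idx L m p) (Idx L m p) ℝ) :
    AmatCR L m p C 0 * Φ = EmatPhi L m p Φ (C * Φ) := by
  ext ⟨i, r⟩ c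
  by_cases h : (i : ℕ) + 1 < L
  · have hshift (x : Idx L m p) :
        ((x.1 : ℕ) = (i : ℕ) + 1 ∧ x.2 = r) ↔ x = (⟨(i : ℕ) + 1, h⟩, r) := by
      simp [Prod.ext_iff, Fin.ext_iff]
    simp [AmatCR, EmatPhi, mul_apply, h, hshift]
  · rcases r with a | b <;> simp [AmatCR, EmatPhi, mul_apply, h]

end Specialization

/-- **Theorem 4.7 (matrix-level content).** Data informativity for quadratic
stabilization: with `Σ = {R : [I_p;Rᵀ]ᵀ Π [I_p;Rᵀ] ⪰ 0}` and `N = Tᵀ Π T`,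
(i) existence of a common Lyapunov certificate `(Ψ, C)` for all `R ∈ Σ` is equivalent to
(ii) feasibility of the LMI, and a feasible `(Φ, D)` yields the stabilizing controller
`C = D Φ⁻¹` with certificate `Ψ = Φ⁻¹`. -/
theorem stmt_9 (L m p : ℕ) (hL : 1 ≤ L) (hm : 1 ≤ m) (hp : 1 ≤ p)
    (Pim : Matrix (Fin p ⊕ Idx L m p) (Fin p ⊕ Idx L m p) ℝ)
    (hsym : Pim.IsSymm)
    (hneg : (-Pim.toBlocks₂₂).PosDef)
    (Rs : Matrix (Fin p) (Idx L m p) ℝ)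
    (hRs : ((stackIp Rs)ᵀ * Pim * stackIp Rs).PosSemidef)
    (N : Matrix (Idx L m p ⊕ Idx L m p) (Idx L m p ⊕ Idx L m p) ℝ)
    (hN : N =
      (Matrix.fromBlocks (JpM L m p) 0 0 (1 : Matrix (Idx L m p) (Idx L m p) ℝ))ᵀ *
        Pim * Matrix.fromBlocks (JpM L m p) 0 0 1) :
    ((∃ (Ψ : Matrix (Idx L m p) (Idx L m p) ℝ) (C : Matrix (Fin m) (Idx L m p) ℝ),
        Ψ.PosDef ∧
          ∀ R : Matrix (Fin p) (Idx L m p) ℝ,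
            ((stackIp R)ᵀ * Pim * stackIp R).PosSemidef →
            ((AmatCR L m p C R)ᵀ * Ψ + Ψ * AmatCR L m p C R).PosDef) ↔
      (∃ (Φ : Matrix (Idx L m p) (Idx L m p) ℝ) (D : Matrix (Fin m) (Idx L m p) ℝ),
        Φ.PosDef ∧
          (Matrix.fromBlocks ((EmatPhi L m p Φ D)ᵀ + EmatPhi L m p Φ D) Φ Φ 0 -
            N).PosDef)) ∧
      (∀ (Φ : Matrix (Idx L m p) (Idx L m p) ℝ) (D : Matrix (Fin m) (Idx L m p) ℝ),
        Φ.PosDef →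
        (Matrix.fromBlocks ((EmatPhi L m p Φ D)ᵀ + EmatPhi L m p Φ D) Φ Φ 0 -
          N).PosDef →
        ∀ R : Matrix (Fin p) (Idx L m p) ℝ,
          ((stackIp R)ᵀ * Pim * stackIp R).PosSemidef →
          ((AmatCR L m p (D * Φ⁻¹) R)ᵀ * Φ⁻¹ +
            Φ⁻¹ * AmatCR L m p (D * Φ⁻¹) R).PosDef) := by
  subst hN
  simp only [stackIp_eq_stackOne] at hRs ⊢
  have hne : (qmiSolutions Pim).Nonempty := ⟨Rsᵀ, hRs⟩
  have sufficiency {Φ : Matrix (Idx L m p) (Idx L m p) ℝ} {D : Matrix (Fin m) (Idx L m p) ℝ}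
      (hΦ : Φ.PosDef) (hLMI : (robustLMI (JpM L m p) Pim (EmatPhi L m p Φ D) Φ).PosDef)
      (R : Matrix (Fin p) (Idx L m p) ℝ) (hR : Rᵀ ∈ qmiSolutions Pim) :
      ((AmatCR L m p (D * Φ⁻¹) R)ᵀ * Φ⁻¹ + Φ⁻¹ * AmatCR L m p (D * Φ⁻¹) R).PosDef := by
    have hE : AmatCR L m p (D * Φ⁻¹) 0 * Φ = EmatPhi L m p Φ D := by
      rw [amatCR_zero_mul, nonsing_inv_mul_cancel_right _ _ ((isUnit_iff_isUnit_det _).1 hΦ.isUnit)]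
    rw [amatCR_eq_add, ← transpose_transpose R]
    exact posDef_lyapunov_of_posDef_robustLMI hΦ (hE ▸ hLMI) hR
  refine ⟨⟨?_, fun ⟨Φ, D, hΦ, hLMI⟩ => ⟨Φ⁻¹, D * Φ⁻¹, hΦ.inv, sufficiency hΦ hLMI⟩⟩,
    fun Φ D => sufficiency⟩
  rintro ⟨Ψ, C, hΨ, hC⟩
  obtain ⟨c, hc, hLMI⟩ := exists_pos_posDef_robustLMI_smul (J := JpM L m p)
    (A := AmatCR L m p C 0) hsym hneg hne hΨ.inv fun Z hZ => by
      rw [nonsing_inv_nonsing_inv _ ((isUnit_iff_isUnit_det _).1 hΨ.isUnit), ← amatCR_eq_add]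
      exact hC Zᵀ hZ
  exact ⟨c • Ψ⁻¹, C * c • Ψ⁻¹, hΨ.inv.smul hc, amatCR_zero_mul C (c • Ψ⁻¹) ▸ hLMI⟩
end
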